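/- arXiv:2404.13938 — 2 statements merged into one kernel-verified Lean document; each statement's English description precedes it below -/
import Mathlib

section
/- Let k be an odd positive integer and let R be a finite group containing a normal subgroup A isomorphic to the cyclic group C_k and an element r of order 8 such that r⁻¹ar = a⁻¹ for every a ∈ A, R = A⟨r⟩, and A ∩ ⟨r⟩ = {1} (so R ≅ C_k ⋊ C_8 with C_8 acting by inversion). Then R does not have the DCI property: there exist subsets S, T ⊆ R and a bijection e : R → R such that for all x, y ∈ R one has y·x⁻¹ ∈ S if and only if e(y)·e(x)⁻¹ ∈ T, yet there is no group automorphism α of R with α(S) = T. -/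
/-!
In the cyclic group of order `8`, written additively, fix the classes `0` and `1` modulo `4` and add
`4` on the classes `2` and `3`. This moves exactly one end of each arc `x → x + 2`, so these arcs
become arcs `x → x + 6`; and since `{1, 5}` is invariant under adding `4`, the arcs `x → x + 1` and
`x → x + 5` are permuted among themselves. So `{1, 2, 5}` and `{1, 5, 6}` define isomorphic Cayley
digraphs. The first set contains an element together with its double, the second does not, and this
distinguishes the two sets under every injective homomorphism. If the cyclic group is embedded in a
group `G`, then the Cayley digraphs of the image sets are disjoint unions of copies, one per right
coset, so the isomorphism extends to `G`.
-/

section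

variable {G H : Type*} [Group G] [Group H]

/-- The permutation `e` is an isomorphism from the Cayley digraph of `S` to that of `T`, where the
arcs of the Cayley digraph of `S` are the pairs `(x, y)` with `y * x⁻¹ ∈ S`. -/
def IsCayleyIso (S T : Set G) (e : G ≃ G) : Prop :=
  ∀ x y : G, y * x⁻¹ ∈ S ↔ e y * (e x)⁻¹ ∈ T

theorem exists_equiv_prod_map_mul {φ : H →* G} (hφ : Function.Injective φ) :
    ∃ (Q : Set G) (ψ : G ≃ H × Q), ∀ h g, ψ (φ h * g) = (h * (ψ g).1, (ψ g).2) := by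
  obtain ⟨Q, hQ, -⟩ := φ.range.exists_isComplement_right 1
  let toRange : H ≃* φ.range := MonoidHom.ofInjective hφ
  refine ⟨Q, hQ.equiv.trans (toRange.symm.toEquiv.prodCongr (Equiv.refl Q)), fun h g => ?_⟩
  have equiv_mul : hQ.equiv (φ h * g) = (toRange h * (hQ.equiv g).1, (hQ.equiv g).2) :=
    hQ.equiv_mul_left (toRange h) g
  simp only [Equiv.trans_apply, equiv_mul, Equiv.prodCongr_apply, Prod.map, MulEquiv.toEquiv_eq_coe,
    MulEquiv.coe_toEquiv, map_mul, MulEquiv.symm_apply_apply, Equiv.refl_apply]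

theorem mul_inv_mem_image_iff {φ : H → G} {Q : Type*} {ψ : G ≃ H × Q}
    (hψ : ∀ h g, ψ (φ h * g) = (h * (ψ g).1, (ψ g).2)) (S : Set H) (x y : G) :
    y * x⁻¹ ∈ φ '' S ↔ (ψ y).1 * (ψ x).1⁻¹ ∈ S ∧ (ψ y).2 = (ψ x).2 := by
  have eq_iff (s : H) : φ s = y * x⁻¹ ↔ s = (ψ y).1 * (ψ x).1⁻¹ ∧ (ψ y).2 = (ψ x).2 := by
    rw [eq_mul_inv_iff_mul_eq, ← ψ.injective.eq_iff, hψ, Prod.ext_iff, eq_mul_inv_iff_mul_eq]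
    exact and_congr_right' eq_comm
  simp only [Set.mem_image, eq_iff]
  exact ⟨fun ⟨_, hs, h, hQ⟩ => ⟨h ▸ hs, hQ⟩, fun ⟨hs, hQ⟩ => ⟨_, hs, rfl, hQ⟩⟩

theorem IsCayleyIso.exists_image {S T : Set H} {e : H ≃ H} (he : IsCayleyIso S T e)
    {φ : H →* G} (hφ : Function.Injective φ) :
    ∃ e' : G ≃ G, IsCayleyIso (φ '' S) (φ '' T) e' := by
  obtain ⟨Q, ψ, hψ⟩ := exists_equiv_prod_map_mul hφ
  refine ⟨ψ.trans ((e.prodCongr (Equiv.refl Q)).trans ψ.symm), fun x y => ?_⟩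
  simpa [mul_inv_mem_image_iff hψ] using fun _ => he (ψ x).1 (ψ y).1

/-- The set `S` contains an element together with its square. This invariant separates the two
connection sets. -/
def HasSquarePair {M : Type*} [Monoid M] (S : Set M) : Prop :=
  ∃ g ∈ S, g ^ 2 ∈ S

theorem hasSquarePair_image_iff {M N F : Type*} [Monoid M] [Monoid N] [FunLike F M N]
    [MonoidHomClass F M N] {φ : F} (hφ : Function.Injective φ) (S : Set M) :
    HasSquarePair (φ '' S) ↔ HasSquarePair S := by
  simp only [HasSquarePair, Set.exists_mem_image, ← map_pow, hφ.mem_set_image]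

theorem exists_injective_monoidHom_of_orderOf_eq {r : G} {n : ℕ} (hr : orderOf r = n) :
    ∃ φ : Multiplicative (ZMod n) →* G, Function.Injective φ := by
  have generates (x : Subgroup.zpowers r) :
      x ∈ Subgroup.zpowers (⟨r, Subgroup.mem_zpowers r⟩ : Subgroup.zpowers r) := by
    obtain ⟨_, m, rfl⟩ := x
    exact ⟨m, rfl⟩
  let toZPowers := zmodMulEquivOfGenerator generates ((Nat.card_zpowers r).trans hr)
  exact ⟨(Subgroup.zpowers r).subtype.comp toZPowers.toMonoidHom,
    Subtype.val_injective.comp toZPowers.injective⟩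

end

section CyclicEight

open Multiplicative

theorem isCayleyIso_zmod_eight :
    IsCayleyIso ({ofAdd 1, ofAdd 2, ofAdd 5} : Set (Multiplicative (ZMod 8)))
      {ofAdd 1, ofAdd 5, ofAdd 6}
      ((Equiv.swap (ofAdd 2) (ofAdd 6)).trans (Equiv.swap (ofAdd 3) (ofAdd 7))) := by
  simp only [IsCayleyIso, Set.mem_insert_iff, Set.mem_singleton_iff]
  decide

theorem hasSquarePair_one_two_five :
    HasSquarePair ({ofAdd 1, ofAdd 2, ofAdd 5} : Set (Multiplicative (ZMod 8))) :=
  ⟨ofAdd 1, Or.inl rfl, Or.inr (Or.inl rfl)⟩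

theorem not_hasSquarePair_one_five_six :
    ¬ HasSquarePair ({ofAdd 1, ofAdd 5, ofAdd 6} : Set (Multiplicative (ZMod 8))) := by
  simp only [HasSquarePair, Set.mem_insert_iff, Set.mem_singleton_iff]
  decide

end CyclicEight

theorem not_DCI_Ck_rtimes_C8_general {G : Type*} [Group G] {r : G} (hr : orderOf r = 8) :
    ∃ (S T : Set G) (e : G ≃ G),
      (∀ x y : G, y * x⁻¹ ∈ S ↔ e y * (e x)⁻¹ ∈ T) ∧
      ¬ ∃ α : G ≃* G, (α : G → G) '' S = T := by
  obtain ⟨φ, hφ⟩ := exists_injective_monoidHom_of_orderOf_eq hr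
  obtain ⟨e, he⟩ := isCayleyIso_zmod_eight.exists_image hφ
  refine ⟨_, _, e, he, fun ⟨α, hα⟩ => not_hasSquarePair_one_five_six ?_⟩
  rw [← hasSquarePair_image_iff hφ, ← hα, hasSquarePair_image_iff α.injective,
    hasSquarePair_image_iff hφ]
  exact hasSquarePair_one_two_five

/-- Let `k` be an odd positive integer and let `R` be a finite group containing a normal
subgroup `A` isomorphic to the cyclic group `C_k` and an element `r` of order `8` such that
`r⁻¹ * a * r = a⁻¹` for every `a ∈ A`, with `R = A⟨r⟩` and `A ∩ ⟨r⟩ = 1`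
(so `R ≅ C_k ⋊ C_8` with `C_8` acting by inversion).  Then `R` does not have the DCI
property: there exist subsets `S, T ⊆ R` and a bijection `e : R → R` such that for all
`x, y ∈ R` one has `y * x⁻¹ ∈ S ↔ e y * (e x)⁻¹ ∈ T`, yet there is no group automorphism
`α` of `R` with `α '' S = T`. -/
theorem not_DCI_Ck_rtimes_C8 {R : Type*} [Group R] [Fintype R]
    (k : ℕ) (hk0 : 0 < k) (hk : Odd k)
    (A : Subgroup R) (hA : A.Normal)
    (hAiso : Nonempty (A ≃* Multiplicative (ZMod k)))
    (r : R) (hr : orderOf r = 8)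
    (hconj : ∀ a ∈ A, r⁻¹ * a * r = a⁻¹)
    (hgen : A ⊔ Subgroup.zpowers r = ⊤)
    (hint : A ⊓ Subgroup.zpowers r = ⊥) :
    ∃ (S T : Set R) (e : R ≃ R),
      (∀ x y : R, y * x⁻¹ ∈ S ↔ e y * (e x)⁻¹ ∈ T) ∧
      ¬ ∃ α : R ≃* R, (α : R → R) '' S = T :=
  not_DCI_Ck_rtimes_C8_general hr
end

section
/- Let k be an odd positive integer and let R be a finite group containing a normal abelian subgroup A isomorphic to C_k × C_3 and an element r of order 8 such that r⁻¹ar = a⁻¹ for every a ∈ A, R = A⟨r⟩, and A ∩ ⟨r⟩ = {1} (so R ≅ (C_k × C_3) ⋊ C_8 with C_8 acting by inversion). Then R does not have the DCI property: there exist subsets S, T ⊆ R and a bijection e : R → R such that for all x, y ∈ R one has y·x⁻¹ ∈ S if and only if e(y)·e(x)⁻¹ ∈ T, yet there is no group automorphism α of R with α(S) = T. -/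
/-!
The cyclic group of order `8` is already not DCI, and this passes to every group containing it.

On `ZMod 8` the involution `x ↦ 2x² - x` maps an arc `x → x + s` to an arc of step
`2s² - s + 4xs`. For `s = 2` the new step is `6`, while for `s = 1, 5` it runs through `{1, 5}`;
hence it maps `Cay(ZMod 8, {1, 2, 5})` onto `Cay(ZMod 8, {1, 5, 6})`. The first connection set
contains an element together with its double and the second does not. If `ZMod 8` embeds in `G`,
the same two sets viewed in `G` define disjoint unions of copies of these digraphs, one for each
right coset of the embedded subgroup, so they are isomorphic as well, while the distinguishing
property of the sets is invariant under all automorphisms of `G`.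
-/

/-- The arc relation of the Cayley digraph `Cay(G, S)`. Isomorphisms of Cayley digraphs are encoded
as relation isomorphisms `CayleyAdj S ≃r CayleyAdj T`. -/
def CayleyAdj {G : Type*} [Group G] (S : Set G) (x y : G) : Prop := y * x⁻¹ ∈ S

section Embedding

variable {G H : Type*} [Group G] [Group H] {f : H →* G}

theorem exists_equiv_prod_of_injective (hf : Function.Injective f) :
    ∃ (Q : Set G) (c : G ≃ H × Q), ∀ h x, c (f h * x) = (h * (c x).1, (c x).2) := by
  obtain ⟨Q, hQ, -⟩ := f.range.exists_isComplement_right 1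
  refine ⟨Q, hQ.equiv.trans ((MonoidHom.ofInjective hf).symm.toEquiv.prodCongr (.refl _)),
    fun h x ↦ ?_⟩
  have hmul := hQ.equiv_mul_left (MonoidHom.ofInjective hf h) x
  rw [MonoidHom.ofInjective_apply] at hmul
  have hfst : (MonoidHom.ofInjective hf).symm (MonoidHom.ofInjective hf h * (hQ.equiv x).1) =
      h * (MonoidHom.ofInjective hf).symm (hQ.equiv x).1 := by
    rw [map_mul, MulEquiv.symm_apply_apply]
  rw [Equiv.trans_apply, hmul]
  exact Prod.ext hfst rfl

theorem cayleyAdj_image_iff {Q : Type*} {c : G ≃ H × Q}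
    (hc : ∀ h x, c (f h * x) = (h * (c x).1, (c x).2)) {S : Set H} {x y : G} :
    CayleyAdj (f '' S) x y ↔ CayleyAdj S (c x).1 (c y).1 ∧ (c y).2 = (c x).2 := by
  constructor
  · rintro ⟨s, hs, hsxy⟩
    obtain rfl : f s * x = y := eq_mul_inv_iff_mul_eq.mp hsxy
    simpa [CayleyAdj, hc] using hs
  · rintro ⟨hS, hQ⟩
    refine ⟨_, hS, eq_mul_inv_of_mul_eq (c.injective ?_)⟩
    rw [hc, inv_mul_cancel_right, ← hQ]

theorem nonempty_cayleyAdj_image_relIso (hf : Function.Injective f) {S T : Set H}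
    (e : CayleyAdj S ≃r CayleyAdj T) :
    Nonempty (CayleyAdj (f '' S) ≃r CayleyAdj (f '' T)) := by
  obtain ⟨Q, c, hc⟩ := exists_equiv_prod_of_injective hf
  refine ⟨(c.trans (e.toEquiv.prodCongr (.refl Q))).trans c.symm, fun {x y} ↦ ?_⟩
  simp [cayleyAdj_image_iff hc, e.map_rel_iff]

end Embedding

theorem exists_pow_mem_image_iff {F M N : Type*} [Monoid M] [Monoid N] [FunLike F M N]
    [MonoidHomClass F M N] {f : F} (hf : Function.Injective f) {S : Set M} {n : ℕ} :
    (∃ t ∈ f '' S, t ^ n ∈ f '' S) ↔ ∃ s ∈ S, s ^ n ∈ S := by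
  simp only [Set.exists_mem_image, ← map_pow, hf.mem_set_image]

theorem exists_injective_zmod_hom {G : Type*} [Group G] {n : ℕ} {r : G} (hr : orderOf r = n) :
    ∃ f : Multiplicative (ZMod n) →* G, Function.Injective f := by
  have hcard : Nat.card (Subgroup.zpowers r) = n := (Nat.card_zpowers r).trans hr
  subst hcard
  exact ⟨(Subgroup.zpowers r).subtype.comp (zmodCyclicMulEquiv inferInstance).toMonoidHom,
    (Subgroup.zpowers r).subtype_injective.comp (zmodCyclicMulEquiv inferInstance).injective⟩

/-- The connection set `{1, 2, 5}` of `ZMod 8`, written multiplicatively; it contains `1` together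
with its double. -/
def zmodEightSource : Set (Multiplicative (ZMod 8)) := Multiplicative.toAdd ⁻¹' {1, 2, 5}

/-- The connection set `{1, 5, 6}` of `ZMod 8`, written multiplicatively; it contains no element
together with its double. -/
def zmodEightTarget : Set (Multiplicative (ZMod 8)) := Multiplicative.toAdd ⁻¹' {1, 5, 6}

/-- The involution `x ↦ 2x² - x` of `ZMod 8`, which carries `Cay(ZMod 8, {1, 2, 5})` to
`Cay(ZMod 8, {1, 5, 6})`. -/
def zmodEightInvolution : Equiv.Perm (ZMod 8) :=
  Function.Involutive.toPerm (fun x ↦ 2 * x ^ 2 - x) fun x ↦ by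
    have h8 : (8 : ZMod 8) = 0 := by decide
    linear_combination (x ^ 4 - x ^ 3) * h8

theorem zmodEightInvolution_add_sub (x s : ZMod 8) :
    zmodEightInvolution (x + s) - zmodEightInvolution x = 2 * s ^ 2 - s + 4 * x * s := by
  change 2 * (x + s) ^ 2 - (x + s) - (2 * x ^ 2 - x) = 2 * s ^ 2 - s + 4 * x * s
  ring

theorem zmodEightInvolution_sub_mem_iff (x y : ZMod 8) :
    zmodEightInvolution y - zmodEightInvolution x ∈ ({1, 5, 6} : Set (ZMod 8)) ↔
      y - x ∈ ({1, 2, 5} : Set (ZMod 8)) := by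
  obtain ⟨s, rfl⟩ : ∃ s, y = x + s := ⟨y - x, (add_sub_cancel x y).symm⟩
  rw [zmodEightInvolution_add_sub, add_sub_cancel_left]
  simp only [Set.mem_insert_iff, Set.mem_singleton_iff]
  revert x s
  decide

/-- `zmodEightInvolution` as an isomorphism of Cayley digraphs. -/
def zmodEightRelIso : CayleyAdj zmodEightSource ≃r CayleyAdj zmodEightTarget where
  toEquiv := Multiplicative.toAdd.trans (zmodEightInvolution.trans Multiplicative.ofAdd)
  map_rel_iff' {x y} := by
    simpa [CayleyAdj, zmodEightSource, zmodEightTarget, ← sub_eq_add_neg]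
      using zmodEightInvolution_sub_mem_iff x.toAdd y.toAdd

theorem exists_sq_mem_zmodEightSource : ∃ s ∈ zmodEightSource, s ^ 2 ∈ zmodEightSource :=
  ⟨.ofAdd 1, .inl rfl, .inr (.inl rfl)⟩

theorem not_exists_sq_mem_zmodEightTarget :
    ¬ ∃ t ∈ zmodEightTarget, t ^ 2 ∈ zmodEightTarget := by
  rintro ⟨t, ht, ht2⟩
  revert t
  simp only [zmodEightTarget, Set.mem_preimage, Set.mem_insert_iff, Set.mem_singleton_iff]
  decide

theorem not_DCI_CkxC3_rtimes_C8_general {R : Type*} [Group R] {r : R} (hr : orderOf r = 8) :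
    ∃ (S T : Set R) (e : R ≃ R),
      (∀ x y : R, y * x⁻¹ ∈ S ↔ e y * (e x)⁻¹ ∈ T) ∧
      ¬ ∃ α : R ≃* R, (α : R → R) '' S = T := by
  obtain ⟨f, hf⟩ := exists_injective_zmod_hom hr
  obtain ⟨e⟩ := nonempty_cayleyAdj_image_relIso hf zmodEightRelIso
  refine ⟨f '' zmodEightSource, f '' zmodEightTarget, e.toEquiv,
    fun _ _ ↦ e.map_rel_iff.symm, ?_⟩
  rintro ⟨α, hα⟩
  have hsource : ∃ s ∈ f '' zmodEightSource, s ^ 2 ∈ f '' zmodEightSource :=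
    (exists_pow_mem_image_iff hf).mpr exists_sq_mem_zmodEightSource
  have htarget : ∃ t ∈ f '' zmodEightTarget, t ^ 2 ∈ f '' zmodEightTarget :=
    hα ▸ (exists_pow_mem_image_iff α.injective).mpr hsource
  exact not_exists_sq_mem_zmodEightTarget ((exists_pow_mem_image_iff hf).mp htarget)

/-- Let `k` be an odd positive integer and let `R` be a finite group containing a normal
abelian subgroup `A` isomorphic to `C_k × C_3` and an element `r` of order `8` such that
`r⁻¹ * a * r = a⁻¹` for every `a ∈ A`, with `R = A⟨r⟩` and `A ∩ ⟨r⟩ = 1`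
(so `R ≅ (C_k × C_3) ⋊ C_8` with `C_8` acting by inversion).  Then `R` does not have the
DCI property. -/
theorem not_DCI_CkxC3_rtimes_C8 {R : Type*} [Group R] [Fintype R]
    (k : ℕ) (hk0 : 0 < k) (hk : Odd k)
    (A : Subgroup R) (hA : A.Normal)
    (hAiso : Nonempty (A ≃* Multiplicative (ZMod k × ZMod 3)))
    (r : R) (hr : orderOf r = 8)
    (hconj : ∀ a ∈ A, r⁻¹ * a * r = a⁻¹)
    (hgen : A ⊔ Subgroup.zpowers r = ⊤)
    (hint : A ⊓ Subgroup.zpowers r = ⊥) :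
    ∃ (S T : Set R) (e : R ≃ R),
      (∀ x y : R, y * x⁻¹ ∈ S ↔ e y * (e x)⁻¹ ∈ T) ∧
      ¬ ∃ α : R ≃* R, (α : R → R) '' S = T :=
  not_DCI_CkxC3_rtimes_C8_general hr
end
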